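/- Let r ≥ 3 be an odd integer and let k be an integer with 1 ≤ k ≤ 2r/3. Then every r-regular graph has a [k−1, k]-factor each of whose connected components is a regular graph. -/

import Mathlib

open Finset SimpleGraph

/-!
A `j`-factor of a `(j + c)`-regular graph on a set `C` of vertices is a perfect matching of the
part over `C` of a gadget graph in which every dart is a vertex. Give the gadget graph edge weights
making all weighted degrees equal to `j + c`. In a Tutte barrier, the members cut off weight at most
`j + c` per barrier vertex, plus `j` for each edge of `G` leaving `C`, so some member of a violating
barrier has a cut lighter than `j + c`. Light odd sets are rigid: if `c` is even they are the parts
over sets with a small odd boundary, and if `c` is odd they come from a set with one boundary edge.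

For odd `r`, one factor degree `j` is odd and the other one `j'` is even. The theorem follows by
induction on `C`, for all sets with a small boundary. If the boundary is even, an extremal barrier
argument removes disjoint light sets, handled by induction, and leaves a `j`-factor on the rest. If
it is odd, either a proper subset with one boundary edge splits off, or there is a `j'`-factor.
-/

section Matching

variable {W : Type*} {Γ : SimpleGraph W}

/-- `HasMatchingOn Γ X` says that the subgraph of `Γ` induced on the finite set `X` has a perfect
matching. It is phrased through subgraphs of `Γ` so that matchings on disjoint sets can be joined
without changing the vertex type. -/
def HasMatchingOn (Γ : SimpleGraph W) (X : Finset W) : Prop :=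
  ∃ M : Γ.Subgraph, M.verts = X ∧ M.IsMatching

lemma HasMatchingOn.pair [DecidableEq W] {x y : W} (h : Γ.Adj x y) : HasMatchingOn Γ {x, y} :=
  ⟨Γ.subgraphOfAdj h, by simp, .subgraphOfAdj h⟩

lemma HasMatchingOn.union [DecidableEq W] {X Y : Finset W} (hX : HasMatchingOn Γ X)
    (hY : HasMatchingOn Γ Y) (hXY : Disjoint X Y) : HasMatchingOn Γ (X ∪ Y) := by
  obtain ⟨M, hMX, hM⟩ := hX
  obtain ⟨N, hNY, hN⟩ := hY
  refine ⟨M ⊔ N, by simp [hMX, hNY], hM.sup hN ?_⟩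
  rwa [hM.support_eq_verts, hN.support_eq_verts, hMX, hNY, disjoint_coe]

lemma HasMatchingOn.biUnion [DecidableEq W] {ι : Type*} {s : Finset ι} {f : ι → Finset W}
    (hf : ∀ i ∈ s, HasMatchingOn Γ (f i)) (hs : (s : Set ι).PairwiseDisjoint f) :
    HasMatchingOn Γ (s.biUnion f) := by
  choose M hverts hM using fun i : s => hf i i.2
  refine ⟨⨆ i, M i, by ext; simp [hverts], .iSup hM fun i j hij => ?_⟩
  change Disjoint (M i).support (M j).support
  rw [(hM i).support_eq_verts, (hM j).support_eq_verts, hverts, hverts, disjoint_coe]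
  exact hs i.2 j.2 (Subtype.coe_injective.ne hij)

lemma hasMatchingOn_map_univ {U : Type*} [Fintype U] {H : SimpleGraph U} (f : H ↪g Γ)
    {M : H.Subgraph} (hM : M.IsPerfectMatching) : HasMatchingOn Γ (univ.map f.toEmbedding) :=
  ⟨M.map f.toHom, by simp [hM.2.verts_eq_univ], hM.1.map f.toHom f.injective⟩

end Matching

section Barrier

variable {W : Type*} [DecidableEq W] {Γ : SimpleGraph W} {X S : Finset W} {𝒦 : Finset (Finset W)}

/-- A Tutte barrier of the subgraph of `Γ` induced on `X`: a set `S` together with a family `𝒦` of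
disjoint odd sets, each a union of components of `X \ S`. Requiring only unions of components,
rather than components, makes the notion stable under the operations below. -/
structure OddBarrier (Γ : SimpleGraph W) (X S : Finset W) (𝒦 : Finset (Finset W)) : Prop where
  subset : S ⊆ X
  member_subset : ∀ A ∈ 𝒦, A ⊆ X \ S
  odd_card : ∀ A ∈ 𝒦, Odd #A
  mem_or_mem : ∀ A ∈ 𝒦, ∀ x ∈ A, ∀ y ∈ X, Γ.Adj x y → y ∈ A ∨ y ∈ S
  pairwiseDisjoint : (𝒦 : Set (Finset W)).PairwiseDisjoint id

/-- The part of `X` covered neither by `S` nor by the members of `𝒦`. -/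
def remainder (X S : Finset W) (𝒦 : Finset (Finset W)) : Finset W := (X \ S) \ 𝒦.biUnion id

lemma mem_remainder {x : W} :
    x ∈ remainder X S 𝒦 ↔ x ∈ X ∧ x ∉ S ∧ ∀ A ∈ 𝒦, x ∉ A := by
  simp [remainder, and_assoc]

namespace OddBarrier

lemma empty (Γ : SimpleGraph W) (X : Finset W) : OddBarrier Γ X ∅ ∅ := by
  constructor <;> simp

lemma singleton (hX : Odd #X) : OddBarrier Γ X ∅ {X} := by
  constructor <;> simp +contextual [hX]

lemma subset_of_mem (h : OddBarrier Γ X S 𝒦) {A : Finset W} (hA : A ∈ 𝒦) : A ⊆ X :=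
  (h.member_subset A hA).trans sdiff_subset

lemma disjoint_of_mem (h : OddBarrier Γ X S 𝒦) {A : Finset W} (hA : A ∈ 𝒦) : Disjoint A S :=
  disjoint_of_subset_left (h.member_subset A hA) sdiff_disjoint

lemma eq_of_mem_of_mem (h : OddBarrier Γ X S 𝒦) {A B : Finset W} (hA : A ∈ 𝒦) (hB : B ∈ 𝒦) {x : W}
    (hxA : x ∈ A) (hxB : x ∈ B) : A = B :=
  h.pairwiseDisjoint.elim_finset hA hB x hxA hxB

lemma restrict (h : OddBarrier Γ X S 𝒦) {S' : Finset W} {𝒦' : Finset (Finset W)} (hS' : S' ⊆ X)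
    (h𝒦' : 𝒦' ⊆ 𝒦) (hdisj : ∀ A ∈ 𝒦', Disjoint A S')
    (hadj : ∀ A ∈ 𝒦', ∀ x ∈ A, ∀ y ∈ S, Γ.Adj x y → y ∈ S') : OddBarrier Γ X S' 𝒦' where
  subset := hS'
  member_subset A hA := subset_sdiff.2 ⟨h.subset_of_mem (h𝒦' hA), hdisj A hA⟩
  odd_card A hA := h.odd_card A (h𝒦' hA)
  mem_or_mem A hA x hx y hy hxy :=
    (h.mem_or_mem A (h𝒦' hA) x hx y hy hxy).imp_right fun hyS => hadj A hA x hx y hyS hxy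
  pairwiseDisjoint := h.pairwiseDisjoint.subset (coe_subset.2 h𝒦')

lemma union (h : OddBarrier Γ X S 𝒦) {Y T : Finset W} {ℒ : Finset (Finset W)}
    (h' : OddBarrier Γ Y T ℒ) (hYX : Y ⊆ X) (hYS : Disjoint Y S) (hY𝒦 : ∀ A ∈ 𝒦, Disjoint A Y)
    (hY : ∀ x ∈ Y, ∀ y ∈ X, Γ.Adj x y → y ∈ Y ∨ y ∈ S) :
    OddBarrier Γ X (S ∪ T) (𝒦 ∪ ℒ) where
  subset := union_subset h.subset (h'.subset.trans hYX)
  member_subset A hA := by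
    rw [subset_sdiff, disjoint_union_right]
    rcases mem_union.1 hA with hA | hA
    · exact ⟨h.subset_of_mem hA, h.disjoint_of_mem hA,
        disjoint_of_subset_right h'.subset (hY𝒦 A hA)⟩
    · exact ⟨(h'.subset_of_mem hA).trans hYX,
        disjoint_of_subset_left (h'.subset_of_mem hA) hYS, h'.disjoint_of_mem hA⟩
  odd_card A hA := (mem_union.1 hA).elim (h.odd_card A) (h'.odd_card A)
  mem_or_mem A hA x hx y hy hxy := by
    rw [mem_union]
    rcases mem_union.1 hA with hA | hA
    · exact (h.mem_or_mem A hA x hx y hy hxy).imp_right .inl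
    · rcases hY x (h'.subset_of_mem hA hx) y hy hxy with hyY | hyS
      · exact (h'.mem_or_mem A hA x hx y hyY hxy).imp_right .inr
      · exact .inr (.inl hyS)
  pairwiseDisjoint := by
    rw [coe_union, Set.pairwiseDisjoint_union]
    exact ⟨h.pairwiseDisjoint, h'.pairwiseDisjoint, fun A hA B hB _ =>
      disjoint_of_subset_right (h'.subset_of_mem hB) (hY𝒦 A hA)⟩

lemma disjoint_families {Y T : Finset W} {ℒ : Finset (Finset W)} (h' : OddBarrier Γ Y T ℒ)
    (hY𝒦 : ∀ A ∈ 𝒦, Disjoint A Y) : Disjoint 𝒦 ℒ := by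
  refine Finset.disjoint_left.2 fun A hA hA' => ?_
  obtain ⟨x, hx⟩ := card_pos.1 (h'.odd_card A hA').pos
  exact Finset.disjoint_left.1 (hY𝒦 A hA) hx (h'.subset_of_mem hA' hx)

lemma mem_remainder_or_mem (h : OddBarrier Γ X S 𝒦) {x y : W} (hx : x ∈ remainder X S 𝒦)
    (hy : y ∈ X) (hxy : Γ.Adj x y) : y ∈ remainder X S 𝒦 ∨ y ∈ S := by
  rw [mem_remainder] at hx
  by_contra! hcon
  obtain ⟨A, hA, hyA⟩ : ∃ A ∈ 𝒦, y ∈ A := by simpa [mem_remainder, hy, hcon.2] using hcon.1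
  rcases h.mem_or_mem A hA y hyA x hx.1 hxy.symm with hxA | hxS
  exacts [hx.2.2 A hA hxA, hx.2.1 hxS]

lemma disjoint_remainder {A : Finset W} (hA : A ∈ 𝒦) : Disjoint A (remainder X S 𝒦) :=
  Finset.disjoint_right.2 fun _ hx => (mem_remainder.1 hx).2.2 A hA

lemma union_remainder (h : OddBarrier Γ X S 𝒦) {T : Finset W} {ℒ : Finset (Finset W)}
    (h' : OddBarrier Γ (remainder X S 𝒦) T ℒ) : OddBarrier Γ X (S ∪ T) (𝒦 ∪ ℒ) :=
  h.union h' (fun _ hx => (mem_remainder.1 hx).1)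
    (Finset.disjoint_left.2 fun _ hx => (mem_remainder.1 hx).2.1)
    (fun _ hA => disjoint_remainder hA) fun _ hx _ hy hxy => h.mem_remainder_or_mem hx hy hxy

lemma card_remainder (h : OddBarrier Γ X S 𝒦) :
    #(remainder X S 𝒦) + ∑ A ∈ 𝒦, #A + #S = #X := by
  have hsub : 𝒦.biUnion id ⊆ X \ S := biUnion_subset.2 h.member_subset
  have hunion : #(𝒦.biUnion id) = ∑ A ∈ 𝒦, #A := card_biUnion h.pairwiseDisjoint
  rw [← hunion, remainder, card_sdiff_add_card_eq_card hsub, card_sdiff_add_card_eq_card h.subset]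

lemma odd_card_remainder (h : OddBarrier Γ X S 𝒦) (hodd : Odd (#X + #S + #𝒦)) :
    Odd #(remainder X S 𝒦) := by
  have hsum : Odd (∑ A ∈ 𝒦, #A) ↔ Odd #𝒦 := by
    rw [odd_sum_iff_odd_card_odd, filter_true_of_mem h.odd_card]
  have hcard := h.card_remainder
  grind

lemma remainder_notMem (hodd : Odd #(remainder X S 𝒦)) : remainder X S 𝒦 ∉ 𝒦 := fun hmem =>
  hodd.pos.ne' (card_eq_zero.2 (disjoint_self_iff_empty _ |>.1 (disjoint_remainder hmem)))

lemma insert_remainder (h : OddBarrier Γ X S 𝒦) (hodd : Odd #(remainder X S 𝒦)) :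
    OddBarrier Γ X S (insert (remainder X S 𝒦) 𝒦) := by
  simpa [union_comm 𝒦] using h.union_remainder (singleton hodd)

lemma map {U : Type*} [DecidableEq U] {H : SimpleGraph U} {Y T : Finset U} {ℒ : Finset (Finset U)}
    (h : OddBarrier H Y T ℒ) (f : H ↪g Γ) :
    OddBarrier Γ (Y.map f.toEmbedding) (T.map f.toEmbedding)
      (ℒ.map (mapEmbedding f.toEmbedding).toEmbedding) where
  subset := map_subset_map.2 h.subset
  member_subset := by simpa [← Finset.map_sdiff, map_subset_map] using h.member_subset
  odd_card := by simpa using h.odd_card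
  mem_or_mem := by simpa using h.mem_or_mem
  pairwiseDisjoint := by
    rw [coe_map]
    rintro _ ⟨A, hA, rfl⟩ _ ⟨B, hB, rfl⟩ hAB
    exact (disjoint_map f.toEmbedding).2 (h.pairwiseDisjoint hA hB (ne_of_apply_ne _ hAB))

end OddBarrier

lemma exists_oddBarrier_of_isTutteViolator {U : Type*} [Fintype U] [DecidableEq U]
    {H : SimpleGraph U} {u : Set U} (hu : H.IsTutteViolator u) :
    ∃ S 𝒦, OddBarrier H univ S 𝒦 ∧ #S < #𝒦 := by
  classical
  let D := (⊤ : H.Subgraph).deleteVerts u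
  have mem_verts (x : U) : x ∈ D.verts ↔ x ∉ u := by simp [D]
  let vertices (c : D.coe.ConnectedComponent) : Finset U :=
    c.supp.toFinset.map (Function.Embedding.subtype _)
  have mem_vertices (c) (x : D.verts) : x.1 ∈ vertices c ↔ D.coe.connectedComponentMk x = c := by
    simp [vertices]
  have exists_of_mem (c) {x : U} (hx : x ∈ vertices c) : ∃ y : D.verts, y.1 = x := by
    obtain ⟨y, -, rfl⟩ := mem_map.1 hx
    exact ⟨y, rfl⟩
  have eq_of_mem {c c'} {x : U} (hx : x ∈ vertices c) (hx' : x ∈ vertices c') : c = c' := by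
    obtain ⟨x, rfl⟩ := exists_of_mem c hx
    rw [← (mem_vertices c x).1 hx, (mem_vertices c' x).1 hx']
  have vertices_injective : Function.Injective vertices := fun c c' hcc' => by
    obtain ⟨x, hx⟩ := c.nonempty_supp
    have hxc := (mem_vertices c x).2 hx
    exact eq_of_mem hxc (hcc' ▸ hxc)
  refine ⟨u.toFinset, D.coe.oddComponents.toFinset.map ⟨vertices, vertices_injective⟩,
    ⟨subset_univ _, ?_, ?_, ?_, ?_⟩, ?_⟩
  · simp only [mem_map, Function.Embedding.coeFn_mk, forall_exists_index, and_imp,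
      forall_apply_eq_imp_iff₂]
    intro c _ x hx
    obtain ⟨x, rfl⟩ := exists_of_mem c hx
    simpa using (mem_verts x).1 x.2
  · simp [vertices, Set.ncard_eq_toFinset_card']
  · simp only [mem_map, Function.Embedding.coeFn_mk, forall_exists_index, and_imp,
      forall_apply_eq_imp_iff₂]
    intro c _ x hx y _ hxy
    obtain ⟨x, rfl⟩ := exists_of_mem c hx
    refine or_iff_not_imp_right.2 fun hyu => ?_
    rw [Set.mem_toFinset] at hyu
    rw [mem_vertices c ⟨y, (mem_verts y).2 hyu⟩, ← (mem_vertices c x).1 hx, ConnectedComponent.eq]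
    exact Adj.reachable (by simpa [D, (mem_verts x).1 x.2, hyu] using hxy.symm)
  · rintro _ hA _ hB hAB
    obtain ⟨c, -, rfl⟩ := mem_map.1 hA
    obtain ⟨c', -, rfl⟩ := mem_map.1 hB
    exact Finset.disjoint_left.2 fun x hx hx' => hAB (congrArg vertices (eq_of_mem hx hx'))
  · rwa [card_map, ← Set.ncard_eq_toFinset_card', ← Set.ncard_eq_toFinset_card']

lemma hasMatchingOn_of_card_le (h : ∀ S 𝒦, OddBarrier Γ X S 𝒦 → #𝒦 ≤ #S) :
    HasMatchingOn Γ X := by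
  let f : Γ.induce (X : Set W) ↪g Γ := Embedding.induce _
  have map_univ : univ.map f.toEmbedding = X := by
    ext x
    simp [f, Embedding.induce]
  obtain ⟨M, hM⟩ : ∃ M : (Γ.induce (X : Set W)).Subgraph, M.IsPerfectMatching := by
    refine tutte.2 fun u hu => ?_
    obtain ⟨S, 𝒦, hbar, hlt⟩ := exists_oddBarrier_of_isTutteViolator hu
    have hle := h _ _ (map_univ ▸ hbar.map f)
    rw [card_map, card_map] at hle
    omega
  exact map_univ ▸ hasMatchingOn_map_univ f hM

lemma hasMatchingOn_of_card_lt_add_two (hX : Even #X)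
    (h : ∀ S 𝒦, OddBarrier Γ X S 𝒦 → #𝒦 < #S + 2) : HasMatchingOn Γ X := by
  refine hasMatchingOn_of_card_le fun S 𝒦 hbar => ?_
  by_contra! hlt
  have hcard : #𝒦 = #S + 1 := by have := h S 𝒦 hbar; omega
  have hodd := hbar.odd_card_remainder (by grind)
  have hins := h _ _ (hbar.insert_remainder hodd)
  rw [card_insert_of_notMem (OddBarrier.remainder_notMem hodd)] at hins
  omega

end Barrier

section Hall

variable {α β : Type*} {K : Finset α} {S : Finset β} {R : α → β → Prop} [DecidableRel R]
  {P : α → Prop}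

/- Hall's theorem for the bipartite graph in which `d = #K - #S` new right-hand vertices are joined
to every element of `K` satisfying `P`. -/
lemma exists_injective_sum_of_hall {d : ℕ} (hd : #K = #S + d)
    (hdef : ∀ J ⊆ K, #J + #S ≤ #K + #{s ∈ S | ∃ a ∈ J, R a s})
    (hhall : ∀ J ⊆ K, (∀ a ∈ J, ¬ P a) → #J ≤ #{s ∈ S | ∃ a ∈ J, R a s}) :
    ∃ f : K → β ⊕ Fin d, f.Injective ∧
      ∀ a : K, (f a).elim (fun s => s ∈ S ∧ R a s) fun _ => P a := by
  classical
  let t (a : K) : Finset (β ⊕ Fin d) := {s ∈ S | R a s}.disjSum {_i | P a}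
  suffices hcard : ∀ I : Finset K, #I ≤ #(I.biUnion t) by
    obtain ⟨f, hf, hft⟩ := (all_card_le_biUnion_card_iff_exists_injective t).1 hcard
    refine ⟨f, hf, fun a => ?_⟩
    have hfa := hft a
    rcases heq : f a with s | i <;> rw [heq] at hfa
    · exact mem_filter.1 (inl_mem_disjSum.1 hfa)
    · exact (mem_filter.1 (inr_mem_disjSum.1 hfa)).2
  intro I
  let J : Finset α := I.map (Function.Embedding.subtype _)
  have hJK : J ⊆ K := fun a ha => by
    obtain ⟨b, -, rfl⟩ := mem_map.1 ha
    exact b.2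
  have mem_t {s : β} (hs : s ∈ ({s ∈ S | ∃ a ∈ J, R a s} : Finset β)) :
      .inl s ∈ I.biUnion t := by
    simp only [mem_filter, J, mem_map] at hs
    obtain ⟨hs, _, ⟨a, ha, rfl⟩, has⟩ := hs
    exact mem_biUnion.2 ⟨a, ha, by simpa [t, hs] using has⟩
  by_cases hP : ∃ a ∈ I, P a
  · obtain ⟨a, haI, ha⟩ := hP
    have hsub : {s ∈ S | ∃ a ∈ J, R a s}.disjSum (univ : Finset (Fin d)) ⊆ I.biUnion t := by
      rintro (s | i) hz
      · exact mem_t (inl_mem_disjSum.1 hz)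
      · exact mem_biUnion.2 ⟨a, haI, by simp [t, ha]⟩
    have hle := card_le_card hsub
    have hJ := hdef J hJK
    simp only [card_disjSum, card_univ, Fintype.card_fin, J, card_map] at hle hJ
    omega
  · have hsub : {s ∈ S | ∃ a ∈ J, R a s}.map .inl ⊆ I.biUnion t := fun z hz => by
      obtain ⟨s, hs, rfl⟩ := mem_map.1 hz
      exact mem_t hs
    have hle := card_le_card hsub
    have hJ := hhall J hJK (by simpa [J] using hP)
    simp only [J, card_map] at hle hJ
    omega

lemma exists_injective_of_hall
    (hdef : ∀ J ⊆ K, #J + #S ≤ #K + #{s ∈ S | ∃ a ∈ J, R a s})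
    (hhall : ∀ J ⊆ K, (∀ a ∈ J, ¬ P a) → #J ≤ #{s ∈ S | ∃ a ∈ J, R a s}) :
    ∃ σ : S → α, σ.Injective ∧ (∀ s, σ s ∈ K ∧ R (σ s) s) ∧ ∀ a ∈ K, (∀ s, σ s ≠ a) → P a := by
  classical
  obtain ⟨d, hd⟩ : ∃ d, #K = #S + d := Nat.exists_eq_add_of_le (by simpa using hdef ∅ (by simp))
  obtain ⟨f, hf, hft⟩ := exists_injective_sum_of_hall hd hdef hhall
  have himage : univ.image f = S.disjSum univ := by
    refine eq_of_subset_of_card_le (image_subset_iff.2 fun a _ => ?_) ?_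
    · have hfa := hft a
      rcases heq : f a with s | i <;> simp_all
    · simp [card_image_of_injective _ hf, hd]
  have hsurj (s : S) : ∃ a, f a = .inl s.1 := by
    have hs : Sum.inl s.1 ∈ univ.image f := himage ▸ inl_mem_disjSum.2 s.2
    simpa only [mem_image, mem_univ, true_and] using hs
  choose σ hσ using hsurj
  refine ⟨fun s => σ s, fun s s' hss' => ?_, fun s => ⟨(σ s).2, ?_⟩, fun a ha hne => ?_⟩
  · exact Subtype.ext (Sum.inl_injective ((hσ s).symm.trans (Subtype.ext hss' ▸ hσ s')))
  · have hs := hft (σ s)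
    rw [hσ] at hs
    exact hs.2
  · have hfa := hft ⟨a, ha⟩
    rcases heq : f ⟨a, ha⟩ with s | i <;> rw [heq] at hfa
    · exact absurd (congrArg Subtype.val (hf ((hσ ⟨s, hfa.1⟩).trans heq.symm))) (hne _)
    · exact hfa

end Hall

section ExtremalBarrier

variable {W : Type*} [DecidableEq W] {Γ : SimpleGraph W} {X S : Finset W} {𝒦 : Finset (Finset W)}

/-- A barrier of largest deficiency `#𝒦 - #S` and, among these, of largest `#S`. The inequalities
are arranged so as to avoid truncated subtraction. -/
structure ExtremalBarrier (Γ : SimpleGraph W) (X S : Finset W) (𝒦 : Finset (Finset W)) : Prop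
    extends OddBarrier Γ X S 𝒦 where
  deficiency_le : ∀ T ℒ, OddBarrier Γ X T ℒ → #ℒ + #S ≤ #𝒦 + #T
  card_le : ∀ T ℒ, OddBarrier Γ X T ℒ → #𝒦 + #T ≤ #ℒ + #S → #T ≤ #S

lemma exists_extremalBarrier (Γ : SimpleGraph W) (X : Finset W) :
    ∃ S 𝒦, ExtremalBarrier Γ X S 𝒦 := by
  classical
  let barriers : Finset (Finset W × Finset (Finset W)) :=
    {p ∈ X.powerset ×ˢ X.powerset.powerset | OddBarrier Γ X p.1 p.2}
  have mem_barriers {S 𝒦} (h : OddBarrier Γ X S 𝒦) : (S, 𝒦) ∈ barriers := by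
    simp only [barriers, mem_filter, mem_product, mem_powerset]
    exact ⟨⟨h.subset, fun A hA => mem_powerset.2 (h.subset_of_mem hA)⟩, h⟩
  obtain ⟨⟨S, 𝒦⟩, hmem, hmax⟩ := exists_max_image barriers
    (fun p => toLex ((#p.2 : ℤ) - #p.1, #p.1)) ⟨_, mem_barriers (.empty Γ X)⟩
  have hmax' (T ℒ) (h : OddBarrier Γ X T ℒ) : (#ℒ : ℤ) - #T < #𝒦 - #S ∨
      (#ℒ : ℤ) - #T = #𝒦 - #S ∧ #T ≤ #S :=
    Prod.Lex.toLex_le_toLex.1 (hmax _ (mem_barriers h))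
  refine ⟨S, 𝒦, (mem_filter.1 hmem).2, fun T ℒ h => ?_, fun T ℒ h hle => ?_⟩
  · have := hmax' T ℒ h
    omega
  · have := hmax' T ℒ h
    omega

namespace ExtremalBarrier

lemma hasMatchingOn_remainder (h : ExtremalBarrier Γ X S 𝒦) :
    HasMatchingOn Γ (remainder X S 𝒦) := by
  refine hasMatchingOn_of_card_le fun T ℒ h' => ?_
  have hle := h.deficiency_le _ _ (h.union_remainder h')
  rw [card_union_of_disjoint (h'.disjoint_families fun _ hA => OddBarrier.disjoint_remainder hA)]
    at hle
  have := card_union_le S T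
  omega

lemma hasMatchingOn_erase (h : ExtremalBarrier Γ X S 𝒦) {A : Finset W} (hA : A ∈ 𝒦) {v : W}
    (hv : v ∈ A) : HasMatchingOn Γ (A.erase v) := by
  have hcard := card_erase_add_one hv
  refine hasMatchingOn_of_card_lt_add_two (by have := h.odd_card A hA; grind) fun T ℒ h' => ?_
  by_contra! hge
  have hvS : v ∉ S := Finset.disjoint_left.1 (h.disjoint_of_mem hA) hv
  have hdisj : ∀ B ∈ 𝒦.erase A, Disjoint B A := fun B hB =>
    h.pairwiseDisjoint (mem_of_mem_erase hB) hA (ne_of_mem_erase hB)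
  have hbase : OddBarrier Γ X (insert v S) (𝒦.erase A) := by
    refine h.restrict (insert_subset (h.subset_of_mem hA hv) h.subset) (erase_subset _ _)
      (fun B hB => disjoint_insert_right.2 ⟨?_, h.disjoint_of_mem (mem_of_mem_erase hB)⟩)
      fun _ _ _ _ _ hy _ => mem_insert_of_mem hy
    exact Finset.disjoint_right.1 (hdisj B hB) hv
  have hdisj' : ∀ B ∈ 𝒦.erase A, Disjoint B (A.erase v) := fun B hB =>
    disjoint_of_subset_right (erase_subset _ _) (hdisj B hB)
  have hbar : OddBarrier Γ X (insert v S ∪ T) (𝒦.erase A ∪ ℒ) := by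
    refine hbase.union h' ((erase_subset _ _).trans (h.subset_of_mem hA))
      (disjoint_insert_right.2 ⟨notMem_erase v A,
        disjoint_of_subset_left (erase_subset _ _) (h.disjoint_of_mem hA)⟩) hdisj' ?_
    intro x hx y hy hxy
    rcases h.mem_or_mem A hA x (mem_of_mem_erase hx) y hy hxy with hyA | hyS
    · by_cases hyv : y = v <;> simp [hyv, hyA]
    · exact .inr (mem_insert_of_mem hyS)
  have hcardS : #(insert v S ∪ T) = #S + 1 + #T := by
    rw [card_union_of_disjoint, card_insert_of_notMem hvS]
    refine disjoint_of_subset_right h'.subset (disjoint_insert_left.2 ⟨notMem_erase v A, ?_⟩)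
    exact disjoint_of_subset_right (erase_subset _ _) (h.disjoint_of_mem hA).symm
  have hcard𝒦 : #(𝒦.erase A ∪ ℒ) + 1 = #𝒦 + #ℒ := by
    rw [card_union_of_disjoint (h'.disjoint_families hdisj'), ← card_erase_add_one hA]
    omega
  have := h.card_le _ _ hbar (by omega)
  omega

lemma hasMatchingOn_insert (h : ExtremalBarrier Γ X S 𝒦) {A : Finset W} (hA : A ∈ 𝒦) {v s : W}
    (hv : v ∈ A) (hs : s ∉ A) (hvs : Γ.Adj v s) : HasMatchingOn Γ (insert s A) := by
  have hunion : insert s A = A.erase v ∪ {v, s} := by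
    rw [← insert_erase hv]
    grind
  rw [hunion]
  exact (h.hasMatchingOn_erase hA hv).union (.pair hvs) (by simp [hs])

lemma exists_saturating_injection (h : ExtremalBarrier Γ X S 𝒦) {P : Finset W → Prop}
    (hP : ∀ T ℒ, OddBarrier Γ X T ℒ → (∀ A ∈ ℒ, ¬ P A) → #ℒ ≤ #T) :
    ∃ σ : S → Finset W, σ.Injective ∧ (∀ s, σ s ∈ 𝒦 ∧ ∃ v ∈ σ s, Γ.Adj v s) ∧
      ∀ A ∈ 𝒦, (∀ s, σ s ≠ A) → P A := by
  classical
  have hsub (𝒥) (h𝒥 : 𝒥 ⊆ 𝒦) :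
      OddBarrier Γ X {s ∈ S | ∃ A ∈ 𝒥, ∃ v ∈ A, Γ.Adj v s} 𝒥 := by
    refine h.restrict ((filter_subset _ _).trans h.subset) h𝒥
      (fun A hA => disjoint_of_subset_right (filter_subset _ _) (h.disjoint_of_mem (h𝒥 hA))) ?_
    exact fun A hA x hx y hy hxy => mem_filter.2 ⟨hy, A, hA, x, hx, hxy⟩
  exact exists_injective_of_hall
    (fun 𝒥 h𝒥 => h.deficiency_le _ _ (hsub 𝒥 h𝒥)) fun 𝒥 h𝒥 => hP _ _ (hsub 𝒥 h𝒥)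

end ExtremalBarrier

namespace OddBarrier

variable {σ : S → Finset W}

lemma pairwiseDisjoint_insert (h : OddBarrier Γ X S 𝒦) (hσ : σ.Injective) (hσ𝒦 : ∀ s, σ s ∈ 𝒦) :
    Set.univ.PairwiseDisjoint fun s : S => insert s.1 (σ s) := by
  have notMem (s s' : S) : s.1 ∉ σ s' := Finset.disjoint_right.1 (h.disjoint_of_mem (hσ𝒦 s')) s.2
  intro s _ s' _ hss'
  have hdisj : Disjoint (σ s) (σ s') := h.pairwiseDisjoint (hσ𝒦 s) (hσ𝒦 s') (hσ.ne hss')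
  simp only [Function.onFun, disjoint_insert_left, disjoint_insert_right, mem_insert, not_or]
  exact ⟨⟨Subtype.coe_injective.ne hss'.symm, notMem s' s⟩, notMem s s', hdisj⟩

lemma disjoint_remainder_biUnion_insert (hσ𝒦 : ∀ s, σ s ∈ 𝒦) :
    Disjoint (remainder X S 𝒦) (univ.biUnion fun s : S => insert s.1 (σ s)) := by
  refine (disjoint_biUnion_right _ _ _).2 fun s _ => ?_
  rw [disjoint_insert_right, mem_remainder]
  exact ⟨fun hs => hs.2.1 s.2, (disjoint_remainder (hσ𝒦 s)).symm⟩

lemma sdiff_biUnion_eq_remainder_union (h : OddBarrier Γ X S 𝒦) (hσ𝒦 : ∀ s, σ s ∈ 𝒦) :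
    X \ {A ∈ 𝒦 | ∀ s, σ s ≠ A}.biUnion id =
      remainder X S 𝒦 ∪ univ.biUnion fun s : S => insert s.1 (σ s) := by
  ext x
  have mem_X {A} (hA : A ∈ 𝒦) (hx : x ∈ A) : x ∈ X ∧ x ∉ S :=
    mem_sdiff.1 (h.member_subset A hA hx)
  simp only [mem_sdiff, mem_biUnion, mem_filter, id, mem_union, mem_remainder, mem_univ, true_and,
    mem_insert, not_exists, not_and, and_imp]
  constructor
  · rintro ⟨hxX, hx⟩
    by_cases hxS : x ∈ S
    · exact .inr ⟨⟨x, hxS⟩, .inl rfl⟩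
    by_cases hx𝒦 : ∃ A ∈ 𝒦, x ∈ A
    · obtain ⟨A, hA, hxA⟩ := hx𝒦
      obtain ⟨s, rfl⟩ : ∃ s, σ s = A := by
        by_contra! hne
        exact hx A hA hne hxA
      exact .inr ⟨s, .inr hxA⟩
    · exact .inl ⟨hxX, hxS, by simpa using hx𝒦⟩
  · rintro (⟨hxX, -, hx𝒦⟩ | ⟨s, rfl | hxs⟩)
    · exact ⟨hxX, fun A hA _ => hx𝒦 A hA⟩
    · exact ⟨h.subset s.2, fun A hA _ hsA => (mem_X hA hsA).2 s.2⟩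
    · exact ⟨(mem_X (hσ𝒦 s) hxs).1, fun A hA hne hxA =>
        hne s (h.eq_of_mem_of_mem (hσ𝒦 s) hA hxs hxA)⟩

end OddBarrier

/- Match the extremal `S` into `𝒦` by Hall's theorem; the members left over satisfy `P`, and each of
the others has a perfect matching together with its partner in `S`. -/
theorem exists_hasMatchingOn_sdiff {P : Finset W → Prop}
    (hP : ∀ S 𝒦, OddBarrier Γ X S 𝒦 → (∀ A ∈ 𝒦, ¬ P A) → #𝒦 ≤ #S) :
    ∃ 𝒬 : Finset (Finset W), (∀ A ∈ 𝒬, P A ∧ A ⊆ X) ∧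
      (𝒬 : Set (Finset W)).PairwiseDisjoint id ∧ HasMatchingOn Γ (X \ 𝒬.biUnion id) := by
  obtain ⟨S, 𝒦, h⟩ := exists_extremalBarrier Γ X
  obtain ⟨σ, hσ, hσadj, hleft⟩ := h.exists_saturating_injection hP
  have hσ𝒦 (s : S) : σ s ∈ 𝒦 := (hσadj s).1
  refine ⟨{A ∈ 𝒦 | ∀ s, σ s ≠ A}, fun A hA => ?_,
    h.pairwiseDisjoint.subset (coe_subset.2 (filter_subset _ _)), ?_⟩
  · obtain ⟨hA, hne⟩ := mem_filter.1 hA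
    exact ⟨hleft A hA hne, h.subset_of_mem hA⟩
  have hpairs : HasMatchingOn Γ (univ.biUnion fun s : S => insert s.1 (σ s)) := by
    refine .biUnion (fun s _ => ?_) (by simpa using h.pairwiseDisjoint_insert hσ hσ𝒦)
    obtain ⟨v, hv, hvs⟩ := (hσadj s).2
    exact h.hasMatchingOn_insert (hσ𝒦 s) hv
      (Finset.disjoint_right.1 (h.disjoint_of_mem (hσ𝒦 s)) s.2) hvs
  rw [h.sdiff_biUnion_eq_remainder_union hσ𝒦]
  exact h.hasMatchingOn_remainder.union hpairs (OddBarrier.disjoint_remainder_biUnion_insert hσ𝒦)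

end ExtremalBarrier

section CutWeight

variable {W : Type*} [Fintype W] [DecidableEq W]

/-- The total weight of the edges leaving `A`, for the edge weights `w`. -/
def cutWeight (w : W → W → ℕ) (A : Finset W) : ℕ := ∑ x ∈ A, ∑ y ∈ Aᶜ, w x y

lemma cutWeight_eq_sum_ite (w : W → W → ℕ) (A : Finset W) :
    cutWeight w A = ∑ x, ∑ y, if x ∈ A ∧ y ∉ A then w x y else 0 := by
  rw [cutWeight, ← sum_subset (subset_univ A) fun x _ hx => by simp [hx]]
  refine sum_congr rfl fun x hx => ?_
  rw [← sum_subset (subset_univ Aᶜ) fun y _ hy => by simp [notMem_compl.1 hy]]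
  exact sum_congr rfl fun y hy => (if_pos ⟨hx, mem_compl.1 hy⟩).symm

lemma OddBarrier.sum_cutWeight_le {Γ : SimpleGraph W} {X S : Finset W} {𝒦 : Finset (Finset W)}
    (h : OddBarrier Γ X S 𝒦) {w : W → W → ℕ} (hw : ∀ x y, ¬ Γ.Adj x y → w x y = 0) :
    ∑ A ∈ 𝒦, cutWeight w A ≤ ∑ s ∈ S, ∑ x, w x s + cutWeight w X := by
  have hleave {A} (hA : A ∈ 𝒦) {x} (hx : x ∈ A) :
      ∑ y ∈ Aᶜ, w x y ≤ ∑ s ∈ S, w x s + ∑ y ∈ Xᶜ, w x y := by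
    rw [← sum_union (disjoint_of_subset_left h.subset disjoint_compl_right)]
    refine sum_le_sum_of_ne_zero fun y hy hxy => ?_
    rw [mem_union, mem_compl]
    by_contra! hcon
    have hadj : Γ.Adj x y := not_imp_comm.1 (hw x y) hxy
    rcases h.mem_or_mem A hA x hx y hcon.2 hadj with hyA | hyS
    exacts [mem_compl.1 hy hyA, hcon.1 hyS]
  calc ∑ A ∈ 𝒦, cutWeight w A
      ≤ ∑ A ∈ 𝒦, ∑ x ∈ A, (∑ s ∈ S, w x s + ∑ y ∈ Xᶜ, w x y) :=
        sum_le_sum fun A hA => sum_le_sum fun x hx => hleave hA hx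
    _ = ∑ x ∈ 𝒦.biUnion id, (∑ s ∈ S, w x s + ∑ y ∈ Xᶜ, w x y) :=
        (sum_biUnion h.pairwiseDisjoint).symm
    _ = ∑ s ∈ S, ∑ x ∈ 𝒦.biUnion id, w x s + ∑ x ∈ 𝒦.biUnion id, ∑ y ∈ Xᶜ, w x y := by
        rw [sum_add_distrib, sum_comm]
    _ ≤ ∑ s ∈ S, ∑ x, w x s + cutWeight w X :=
        add_le_add (sum_le_sum fun s _ => sum_le_sum_of_subset (subset_univ _))
          (sum_le_sum_of_subset (biUnion_subset.2 fun A hA => h.subset_of_mem hA))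

end CutWeight

section Boundary

lemma even_card_of_symm_mem {V : Type*} {G : SimpleGraph V} {T : Finset G.Dart}
    (hT : ∀ d ∈ T, d.symm ∈ T) : Even #T := by
  have hsum : ∑ _d ∈ T, (1 : ZMod 2) = 0 :=
    sum_involution (fun d _ => d.symm) (fun _ _ => by decide) (fun d _ _ => d.symm_ne)
      hT fun d _ => d.symm_symm
  rwa [sum_const, nsmul_one, ZMod.natCast_eq_zero_iff_even] at hsum

variable {V : Type*} [Fintype V] [DecidableEq V] {G : SimpleGraph V} [DecidableRel G.Adj]

lemma card_darts_fst_mem {r : ℕ} (hG : G.IsRegularOfDegree r) (C : Finset V) :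
    #{d : G.Dart | d.fst ∈ C} = r * #C := by
  rw [mul_comm, ← smul_eq_mul, ← sum_const, card_eq_sum_card_fiberwise (t := C)
    (f := fun d : G.Dart => d.fst) (by simp [Set.MapsTo])]
  refine sum_congr rfl fun v hv => ?_
  rw [← hG v, ← G.dart_fst_fiber_card_eq_degree, filter_filter]
  congr 1
  grind

/-- The edges of `G` leaving `C`, oriented outwards. -/
def boundary (G : SimpleGraph V) [DecidableRel G.Adj] (C : Finset V) : Finset G.Dart :=
  {d | d.fst ∈ C ∧ d.snd ∉ C}

lemma mem_boundary {C : Finset V} {d : G.Dart} :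
    d ∈ boundary G C ↔ d.fst ∈ C ∧ d.snd ∉ C := by
  simp [boundary]

lemma odd_card_boundary_iff {r : ℕ} (hG : G.IsRegularOfDegree r) (hr : Odd r) (C : Finset V) :
    Odd #(boundary G C) ↔ Odd #C := by
  have hinner : Even #{d : G.Dart | d.fst ∈ C ∧ d.snd ∈ C} :=
    even_card_of_symm_mem fun d hd => by simpa [and_comm] using hd
  have hsplit := card_filter_add_card_filter_not (s := {d : G.Dart | d.fst ∈ C}) (·.snd ∈ C)
  rw [filter_filter, filter_filter, card_darts_fst_mem hG C] at hsplit
  change _ + #(boundary G C) = _ at hsplit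
  have hmul : Odd (r * #C) ↔ Odd #C := by simp [Nat.odd_mul, hr]
  grind

lemma card_boundary_sdiff_le (C D : Finset V) :
    #(boundary G (C \ D)) ≤ #(boundary G C) + #(boundary G D) := by
  have hsub : boundary G (C \ D) ⊆ boundary G C ∪ (boundary G D).image fun d => d.symm := by
    intro d hd
    simp only [mem_boundary, mem_sdiff, mem_union, mem_image] at hd ⊢
    by_cases hC : d.snd ∈ C
    · exact .inr ⟨d.symm, ⟨by simpa [hC] using hd.2, hd.1.2⟩, d.symm_symm⟩
    · exact .inl ⟨hd.1.1, hC⟩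
  calc #(boundary G (C \ D)) ≤ #(boundary G C) + #((boundary G D).image fun d => d.symm) :=
        (card_le_card hsub).trans (card_union_le _ _)
    _ ≤ #(boundary G C) + #(boundary G D) := Nat.add_le_add_left card_image_le _

lemma boundary_univ : boundary G univ = ∅ := by
  simp [boundary]

end Boundary

section Gadget

variable {V : Type*} {G : SimpleGraph V} {c j : ℕ}

/-- The gadget graph turning factors into perfect matchings. Every dart of `G` is a vertex, joined
to its reversal, and every vertex `v` of `G` gets a core of `c` further vertices `(v, i)`, joined to
all darts leaving `v`. If `G` is `(j + c)`-regular, a perfect matching uses up `c` of the darts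
leaving `v` on the core, and the other `j` darts trace out a `j`-factor. -/
def gadget (G : SimpleGraph V) (c : ℕ) : SimpleGraph (G.Dart ⊕ V × Fin c) where
  Adj
    | .inl d, .inl e => e = d.symm
    | .inl d, .inr (v, _) => d.fst = v
    | .inr (v, _), .inl d => d.fst = v
    | .inr _, .inr _ => False
  symm := ⟨by
    rintro (d | x) (e | y) h
    exacts [h ▸ d.symm_symm.symm, h, h, h]⟩
  loopless := ⟨by
    rintro (d | x) h
    exacts [d.symm_ne h.symm, h]⟩

/-- The vertex of `G` to which a vertex of the gadget graph is attached. -/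
def owner : G.Dart ⊕ V × Fin c → V := Sum.elim (·.fst) Prod.fst

/-- Edge weights on the gadget graph, `j` on the edges between reverse darts and `1` on the edges
to the cores, so that every weighted degree is `j + c` when `G` is `(j + c)`-regular. -/
def gadgetWeight [DecidableEq V] (j : ℕ) : G.Dart ⊕ V × Fin c → G.Dart ⊕ V × Fin c → ℕ
  | .inl d, .inl e => if d.symm = e then j else 0
  | .inl d, .inr (v, _) => if d.fst = v then 1 else 0
  | .inr (v, _), .inl d => if d.fst = v then 1 else 0
  | .inr _, .inr _ => 0

lemma gadgetWeight_eq_zero [DecidableEq V] {x y : G.Dart ⊕ V × Fin c}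
    (h : ¬ (gadget G c).Adj x y) : gadgetWeight j x y = 0 := by
  rcases x with d | ⟨v, i⟩ <;> rcases y with e | ⟨w, i'⟩
  exacts [if_neg fun hde => h hde.symm, if_neg h, if_neg h, rfl]

variable [Fintype V] [DecidableEq V] [DecidableRel G.Adj]

lemma sum_gadgetWeight (hG : G.IsRegularOfDegree (j + c)) (y : G.Dart ⊕ V × Fin c) :
    ∑ x, gadgetWeight j x y = j + c := by
  rcases y with e | ⟨v, i⟩
  · simp [gadgetWeight, Fintype.sum_prod_type_right, Dart.symm_involutive.eq_iff, -sum_boole]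
  · simp [gadgetWeight, G.dart_fst_fiber_card_eq_degree, hG v]

/-- The part of the gadget graph attached to the vertices in `C`. -/
def blowUp (G : SimpleGraph V) [DecidableRel G.Adj] (c : ℕ) (C : Finset V) :
    Finset (G.Dart ⊕ V × Fin c) :=
  {x | owner x ∈ C}

@[simp]
lemma mem_blowUp {C : Finset V} {x : G.Dart ⊕ V × Fin c} : x ∈ blowUp G c C ↔ owner x ∈ C := by
  simp [blowUp]

lemma card_blowUp {r : ℕ} (hG : G.IsRegularOfDegree r) (C : Finset V) :
    #(blowUp G c C) = r * #C + c * #C := by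
  have hsum : blowUp G c C = ({d | d.fst ∈ C} : Finset G.Dart).disjSum (C ×ˢ univ) := by
    ext (d | x) <;> simp [owner]
  simp [hsum, card_disjSum, card_darts_fst_mem hG, mul_comm c]

lemma blowUp_sdiff (C D : Finset V) : blowUp G c (C \ D) = blowUp G c C \ blowUp G c D := by
  ext
  simp

lemma blowUp_subset_blowUp_iff (hc : 0 < c) {C D : Finset V} :
    blowUp G c C ⊆ blowUp G c D ↔ C ⊆ D := by
  refine ⟨fun h v hv => ?_, fun h x hx => mem_blowUp.2 (h (mem_blowUp.1 hx))⟩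
  have hcore : .inr (v, ⟨0, hc⟩) ∈ blowUp G c D := h (mem_blowUp.2 hv)
  exact mem_blowUp.1 hcore

/-- The weight of the edges of the cut of `K` that are charged to the dart `d`: those joining `d` to
its core, and the edge to its reversal if it is `d` that lies in `K`. -/
def dartCost (j : ℕ) (K : Finset (G.Dart ⊕ V × Fin c)) (d : G.Dart) : ℕ :=
  if .inl d ∈ K then #{i : Fin c | .inr (d.fst, i) ∉ K} + if .inl d.symm ∈ K then 0 else j
  else #{i : Fin c | .inr (d.fst, i) ∈ K}

lemma cutWeight_eq_sum_dartCost (K : Finset (G.Dart ⊕ V × Fin c)) :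
    cutWeight (gadgetWeight j) K = ∑ d, dartCost j K d := by
  rw [cutWeight_eq_sum_ite, Fintype.sum_sum_type]
  simp only [Fintype.sum_sum_type, gadgetWeight, ite_self, sum_const_zero, add_zero]
  rw [sum_comm (s := (univ : Finset (V × Fin c))), ← sum_add_distrib]
  refine sum_congr rfl fun d _ => ?_
  by_cases hd : .inl d ∈ K
  · simp only [hd, true_and, not_true, and_false, if_false, ← ite_and, and_comm (b := d.symm = _),
      and_comm (b := d.fst = _), Fintype.sum_prod_type_right, dartCost, if_true]
    simp [ite_and, add_comm, card_filter]
  · simp only [hd, false_and, if_false, ← ite_and, and_comm (b := d.fst = _),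
      Fintype.sum_prod_type_right, dartCost]
    simp [ite_and]

/-- The cores lying in `K` are exactly those of the vertices in `C`, and the other cores are
disjoint from `K`. -/
def HasCoreSupport (K : Finset (G.Dart ⊕ V × Fin c)) (C : Finset V) : Prop :=
  ∀ v i, .inr (v, i) ∈ K ↔ v ∈ C

/-- A core split by `K` costs at least `1` for each of the `j + c` darts attached to it. -/
lemma exists_hasCoreSupport (hG : G.IsRegularOfDegree (j + c)) {K : Finset (G.Dart ⊕ V × Fin c)}
    (hK : cutWeight (gadgetWeight j) K < j + c) : ∃ C, HasCoreSupport K C := by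
  refine ⟨({v | ∃ i, .inr (v, i) ∈ K} : Finset V), fun v i => ?_⟩
  simp only [mem_filter, mem_univ, true_and]
  refine ⟨fun hi => ⟨i, hi⟩, fun ⟨i', hi'⟩ => ?_⟩
  by_contra hi
  have hcost {d : G.Dart} (hd : d.fst = v) : 1 ≤ dartCost j K d := by
    unfold dartCost
    split_ifs
    all_goals grind [card_pos, filter_nonempty_iff]
  have hsum : j + c ≤ cutWeight (gadgetWeight j) K := by
    rw [cutWeight_eq_sum_dartCost, ← hG v, ← G.dart_fst_fiber_card_eq_degree, card_eq_sum_ones]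
    exact (sum_le_sum fun d hd => hcost (mem_filter.1 hd).2).trans
      (sum_le_sum_of_subset (subset_univ _))
  exact hsum.not_gt hK

/-- The darts that lie on the other side of the cut of `K` than the cores they are joined to, when
`C` is the core support of `K`. -/
def misplacedDarts (K : Finset (G.Dart ⊕ V × Fin c)) (C : Finset V) : Finset G.Dart :=
  {d | ¬ (.inl d ∈ K ↔ d.fst ∈ C)}

/-- The darts in `K` whose reversals are not in `K`. -/
def exitDarts (K : Finset (G.Dart ⊕ V × Fin c)) : Finset G.Dart :=
  {d | .inl d ∈ K ∧ .inl d.symm ∉ K}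

lemma exitDarts_blowUp (C : Finset V) : exitDarts (blowUp G c C) = boundary G C := by
  ext d
  simp [exitDarts, boundary, owner]

namespace HasCoreSupport

variable {K : Finset (G.Dart ⊕ V × Fin c)} {C : Finset V}

lemma blowUp (G : SimpleGraph V) [DecidableRel G.Adj] (c : ℕ) (C : Finset V) :
    HasCoreSupport (blowUp G c C) C := by
  simp [HasCoreSupport, owner]

lemma eq_blowUp (h : HasCoreSupport K C) (hmis : misplacedDarts K C = ∅) :
    K = _root_.blowUp G c C := by
  ext (d | ⟨v, i⟩)
  · simpa [owner] using filter_eq_empty_iff.1 hmis (mem_univ d)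
  · simpa [owner] using h v i

lemma cutWeight_eq (h : HasCoreSupport K C) :
    cutWeight (gadgetWeight j) K = c * #(misplacedDarts K C) + j * #(exitDarts K) := by
  have hcost (d : G.Dart) : dartCost j K d =
      (if ¬ (.inl d ∈ K ↔ d.fst ∈ C) then c else 0) +
        if .inl d ∈ K ∧ .inl d.symm ∉ K then j else 0 := by
    by_cases hd : .inl d ∈ K <;> by_cases hC : d.fst ∈ C <;> simp [dartCost, h _ _, hd, hC, ite_not]
  simp only [cutWeight_eq_sum_dartCost, hcost, sum_add_distrib, misplacedDarts, exitDarts,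
    card_filter, mul_sum, mul_ite, mul_one, mul_zero]

lemma odd_card_iff (h : HasCoreSupport K C) : Odd #K ↔ Odd (c * #C + #(exitDarts K)) := by
  have hcores : K.toRight = C ×ˢ univ := by
    ext ⟨v, i⟩
    simpa using h v i
  have hinner : Even #{d ∈ K.toLeft | .inl d.symm ∈ K} :=
    even_card_of_symm_mem fun d hd => by simpa [and_comm] using hd
  have houter : {d ∈ K.toLeft | .inl d.symm ∉ K} = exitDarts K := by
    ext d
    simp [exitDarts]
  have hdarts := card_filter_add_card_filter_not (s := K.toLeft) (.inl ·.symm ∈ K)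
  have hcard := K.card_toLeft_add_card_toRight
  rw [hcores, card_product, card_univ, Fintype.card_fin, mul_comm] at hcard
  rw [houter] at hdarts
  grind

lemma card_boundary_le (hexit : exitDarts K = ∅) : #(boundary G C) ≤ #(misplacedDarts K C) := by
  have hsymm {d : G.Dart} (hd : .inl d ∈ K) : .inl d.symm ∈ K := by
    simpa [hd] using filter_eq_empty_iff.1 hexit (mem_univ d)
  refine card_le_card_of_injOn (fun d => if .inl d ∈ K then d.symm else d) (fun d hd => ?_) ?_
  · have hbd := mem_boundary.1 hd
    by_cases hdK : .inl d ∈ K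
    · simp [misplacedDarts, hdK, hsymm hdK, hbd.2]
    · simp [misplacedDarts, hdK, hbd.1]
  · intro d hd e he hde
    have hd' := mem_boundary.1 hd
    have he' := mem_boundary.1 he
    dsimp only at hde
    split_ifs at hde
    · exact Dart.symm_involutive.injective hde
    · subst hde
      exact absurd he'.1 hd'.2
    · subst hde
      exact absurd hd'.1 he'.2
    · exact hde

end HasCoreSupport

lemma cutWeight_blowUp (C : Finset V) :
    cutWeight (gadgetWeight j) (blowUp G c C) = j * #(boundary G C) := by
  have hmis : misplacedDarts (blowUp G c C) C = ∅ := by simp [misplacedDarts, owner]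
  rw [(HasCoreSupport.blowUp G c C).cutWeight_eq, hmis, exitDarts_blowUp, card_empty, mul_zero,
    zero_add]

lemma OddBarrier.sum_cutWeight_blowUp_le (hG : G.IsRegularOfDegree (j + c)) {C : Finset V}
    {S : Finset (G.Dart ⊕ V × Fin c)} {𝒦 : Finset (Finset (G.Dart ⊕ V × Fin c))}
    (h : OddBarrier (gadget G c) (blowUp G c C) S 𝒦) :
    ∑ A ∈ 𝒦, cutWeight (gadgetWeight j) A ≤ (j + c) * #S + j * #(boundary G C) := by
  have hsum := h.sum_cutWeight_le fun _ _ => gadgetWeight_eq_zero (j := j)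
  simpa only [sum_gadgetWeight hG, sum_const, smul_eq_mul, mul_comm, cutWeight_blowUp] using hsum

lemma exists_eq_blowUp_of_cutWeight_lt (hG : G.IsRegularOfDegree (j + c)) (hc : Even c)
    {K : Finset (G.Dart ⊕ V × Fin c)} (hK : cutWeight (gadgetWeight j) K < j + c) (hodd : Odd #K) :
    ∃ C, K = blowUp G c C ∧ Odd #(boundary G C) := by
  obtain ⟨C, hC⟩ := exists_hasCoreSupport hG hK
  have hexit : Odd #(exitDarts K) := by
    have hpar := hC.odd_card_iff.1 hodd
    grind
  have hmis : misplacedDarts K C = ∅ := by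
    rw [hC.cutWeight_eq] at hK
    by_contra hne
    have hc_le : c ≤ c * #(misplacedDarts K C) :=
      Nat.le_mul_of_pos_right c (card_pos.2 (nonempty_iff_ne_empty.2 hne))
    have hj_le : j ≤ j * #(exitDarts K) := Nat.le_mul_of_pos_right j hexit.pos
    omega
  obtain rfl := hC.eq_blowUp hmis
  exact ⟨C, rfl, exitDarts_blowUp (G := G) (c := c) C ▸ hexit⟩

lemma exists_card_boundary_eq_one_of_cutWeight_lt (hG : G.IsRegularOfDegree (j + c)) (hj : Even j)
    (hc : Odd c) (hjc : j ≤ 2 * c) {K : Finset (G.Dart ⊕ V × Fin c)}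
    (hK : cutWeight (gadgetWeight j) K < j + c) (hodd : Odd #K) :
    ∃ C, HasCoreSupport K C ∧ #(boundary G C) = 1 ∧ c ≤ cutWeight (gadgetWeight j) K := by
  obtain ⟨C, hC⟩ := exists_hasCoreSupport hG hK
  have hmis : 0 < #(misplacedDarts K C) := by
    refine card_pos.2 (nonempty_iff_ne_empty.2 fun hempty => ?_)
    rw [hC.eq_blowUp hempty, card_blowUp hG] at hodd
    grind
  have hc_le : c ≤ c * #(misplacedDarts K C) := Nat.le_mul_of_pos_right c hmis
  rw [hC.cutWeight_eq] at hK ⊢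
  have hexit : exitDarts K = ∅ := by
    by_contra hne
    have hj_le : j ≤ j * #(exitDarts K) :=
      Nat.le_mul_of_pos_right j (card_pos.2 (nonempty_iff_ne_empty.2 hne))
    omega
  have hmis_lt : #(misplacedDarts K C) < 3 := by
    refine Nat.lt_of_mul_lt_mul_left (a := c) ?_
    omega
  have hbd : Odd #(boundary G C) := by
    have hpar := hC.odd_card_iff.1 hodd
    rw [hexit, card_empty, add_zero] at hpar
    exact (odd_card_boundary_iff hG (hj.add_odd hc) C).2 (Nat.odd_mul.1 hpar).2
  have hbd_le := HasCoreSupport.card_boundary_le (C := C) hexit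
  exact ⟨C, hC, by grind, hc_le.trans (Nat.le_add_right _ _)⟩

end Gadget

section MatchingFactor

variable {V : Type*} {G : SimpleGraph V} {c j : ℕ}

/-- The spanning subgraph of `G` formed by the edges whose two darts are matched by `M`. -/
def matchingFactor (M : (gadget G c).Subgraph) : SimpleGraph V where
  Adj u v := ∃ h : G.Adj u v, M.Adj (.inl ⟨(u, v), h⟩) (.inl ⟨(v, u), h.symm⟩)
  symm := ⟨fun _ _ ⟨h, hM⟩ => ⟨h.symm, hM.symm⟩⟩
  loopless := ⟨fun _ ⟨h, _⟩ => h.ne rfl⟩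

variable [Fintype V] [DecidableRel G.Adj] {M : (gadget G c).Subgraph} {v : V}

open scoped Classical in
lemma card_darts_not_adj_symm (hM : M.IsMatching) (hv : ∀ x, owner x = v → x ∈ M.verts) :
    #{d : G.Dart | d.fst = v ∧ ¬ M.Adj (.inl d) (.inl d.symm)} = c := by
  have hcore (i : Fin c) : ∃ d : G.Dart, d.fst = v ∧ M.Adj (.inl d) (.inr (v, i)) := by
    obtain ⟨d | x, hd, -⟩ := hM (hv (.inr (v, i)) rfl)
    exacts [⟨d, M.adj_sub hd, hd.symm⟩, (M.adj_sub hd).elim]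
  choose f hfst hadj using hcore
  have hinj : f.Injective := fun i i' hi =>
    congrArg Prod.snd (Sum.inr_injective (hM.eq_of_adj_left (hadj i) (hi ▸ hadj i')))
  have himage : univ.filter (fun d : G.Dart => d.fst = v ∧ ¬ M.Adj (.inl d) (.inl d.symm)) =
      univ.image f := by
    ext d
    simp only [mem_filter, mem_univ, true_and, mem_image]
    constructor
    · rintro ⟨rfl, hd⟩
      obtain ⟨e | ⟨w, i⟩, hde, -⟩ := hM (hv (.inl d) rfl)
      · obtain rfl : e = d.symm := M.adj_sub hde
        exact absurd hde hd
      · obtain rfl : d.fst = w := M.adj_sub hde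
        exact ⟨i, Sum.inl_injective (hM.eq_of_adj_right (hadj i) hde)⟩
    · rintro ⟨i, rfl⟩
      exact ⟨hfst i, fun hsymm => Sum.inl_ne_inr (hM.eq_of_adj_left hsymm (hadj i))⟩
  rw [himage, card_image_of_injective _ hinj, card_univ, Fintype.card_fin]

open scoped Classical in
lemma card_darts_adj_symm :
    #{d : G.Dart | d.fst = v ∧ M.Adj (.inl d) (.inl d.symm)} = (matchingFactor M).degree v := by
  rw [← card_neighborFinset_eq_degree]
  refine card_nbij (·.snd) ?_ ?_ ?_
  · rintro ⟨⟨u, w⟩, h⟩ hd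
    obtain ⟨rfl, hM⟩ : u = v ∧ _ := by simpa using hd
    simpa using ⟨h, hM⟩
  · intro d hd e he hde
    simp only [coe_filter, mem_univ, true_and, Set.mem_ofPred_eq] at hd he
    exact Dart.ext _ _ (Prod.ext (hd.1.trans he.1.symm) hde)
  · intro w hw
    obtain ⟨h, hM⟩ : (matchingFactor M).Adj v w := by simpa using hw
    exact ⟨⟨(v, w), h⟩, by simpa using hM, rfl⟩

open scoped Classical in
lemma degree_matchingFactor (hG : G.IsRegularOfDegree (j + c)) (hM : M.IsMatching)
    (hv : ∀ x, owner x = v → x ∈ M.verts) : (matchingFactor M).degree v = j := by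
  have hsplit := card_filter_add_card_filter_not (s := {d : G.Dart | d.fst = v})
    fun d => M.Adj (.inl d) (.inl d.symm)
  rw [filter_filter, filter_filter, card_darts_not_adj_symm hM hv, card_darts_adj_symm,
    G.dart_fst_fiber_card_eq_degree, hG v] at hsplit
  exact Nat.add_right_cancel hsplit

end MatchingFactor

section LocallyRegularFactor

lemma degree_eq_of_forall_adj_iff {V : Type*} {F F' : SimpleGraph V} {v : V}
    [Fintype (F.neighborSet v)] [Fintype (F'.neighborSet v)] (h : ∀ u, F.Adj v u ↔ F'.Adj v u) :
    F.degree v = F'.degree v := by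
  rw [← card_neighborFinset_eq_degree, ← card_neighborFinset_eq_degree]
  congr 1
  ext u
  simp [h u]

variable {V : Type*} [Fintype V] {G : SimpleGraph V} {D : Set ℕ} {C C' : Finset V} {c j : ℕ}

open scoped Classical in
/-- A subgraph of `G` with all its edges inside `C`, with degrees in `D` on `C`, and with equal
degrees at the ends of each edge. The last condition amounts to the regularity of all components. -/
def HasLocallyRegularFactorOn (G : SimpleGraph V) (D : Set ℕ) (C : Finset V) : Prop :=
  ∃ F ≤ G, (∀ u v, F.Adj u v → u ∈ C) ∧ (∀ v ∈ C, F.degree v ∈ D) ∧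
    ∀ u v, F.Adj u v → F.degree u = F.degree v

namespace HasLocallyRegularFactorOn

lemma empty (G : SimpleGraph V) (D : Set ℕ) : HasLocallyRegularFactorOn G D ∅ :=
  ⟨⊥, bot_le, by simp⟩

lemma union [DecidableEq V] (hC : HasLocallyRegularFactorOn G D C)
    (hC' : HasLocallyRegularFactorOn G D C') (hdisj : Disjoint C C') :
    HasLocallyRegularFactorOn G D (C ∪ C') := by
  classical
  obtain ⟨F, hFG, hF, hdeg, hreg⟩ := hC
  obtain ⟨F', hFG', hF', hdeg', hreg'⟩ := hC'
  obtain ⟨H, hH⟩ : ∃ H, H = F ⊔ F' := ⟨_, rfl⟩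
  have hleft {v} (hv : v ∈ C) : H.degree v = F.degree v :=
    degree_eq_of_forall_adj_iff fun u => by
      simpa [hH] using fun h => absurd (hF' v u h) (Finset.disjoint_left.1 hdisj hv)
  have hright {v} (hv : v ∈ C') : H.degree v = F'.degree v :=
    degree_eq_of_forall_adj_iff fun u => by
      simpa [hH] using fun h => absurd hv (Finset.disjoint_left.1 hdisj (hF v u h))
  refine ⟨H, hH ▸ sup_le hFG hFG', fun u v huv => ?_, fun v hv => ?_, fun u v huv => ?_⟩
  · rw [hH] at huv
    exact mem_union.2 (huv.imp (hF u v) (hF' u v))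
  · rcases mem_union.1 hv with hv | hv
    exacts [(hleft hv).symm ▸ hdeg v hv, (hright hv).symm ▸ hdeg' v hv]
  · rw [hH] at huv
    rcases huv with huv | huv
    · rw [hleft (hF u v huv), hleft (hF v u huv.symm), hreg u v huv]
    · rw [hright (hF' u v huv), hright (hF' v u huv.symm), hreg' u v huv]

lemma biUnion [DecidableEq V] {ι : Type*} {s : Finset ι} {f : ι → Finset V}
    (hf : ∀ i ∈ s, HasLocallyRegularFactorOn G D (f i)) (hs : (s : Set ι).PairwiseDisjoint f) :
    HasLocallyRegularFactorOn G D (s.biUnion f) := by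
  classical
  induction s using Finset.induction_on with
  | empty => exact empty G D
  | insert i s hi ih =>
    rw [coe_insert] at hs
    rw [biUnion_insert]
    have hrest := ih (fun k hk => hf k (mem_insert_of_mem hk)) (hs.subset (Set.subset_insert i s))
    refine (hf i (mem_insert_self i s)).union hrest ?_
    refine (disjoint_biUnion_right _ _ _).2 fun k hk => ?_
    exact hs (Set.mem_insert i s) (Set.mem_insert_of_mem i hk) fun hik => hi (hik ▸ hk)

lemma of_subset [DecidableEq V] (hC : HasLocallyRegularFactorOn G D C)
    (hC' : HasLocallyRegularFactorOn G D (C' \ C)) (h : C ⊆ C') :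
    HasLocallyRegularFactorOn G D C' := by
  simpa only [union_sdiff_of_subset h] using hC.union hC' disjoint_sdiff

open scoped Classical in
lemma exists_forall_mem_supp (h : HasLocallyRegularFactorOn G D univ) :
    ∃ F ≤ G, (∀ v, F.degree v ∈ D) ∧
      ∀ K : F.ConnectedComponent, ∃ d, ∀ v ∈ K.supp, F.degree v = d := by
  obtain ⟨F, hFG, -, hdeg, hreg⟩ := h
  refine ⟨F, hFG, fun v => hdeg v (mem_univ v), fun K => ?_⟩
  have hwalk {u v : V} (p : F.Walk u v) : F.degree u = F.degree v := by
    induction p with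
    | nil => rfl
    | cons huv _ ih => exact (hreg _ _ huv).trans ih
  refine K.ind fun u => ⟨F.degree u, fun v hv => ?_⟩
  obtain ⟨p⟩ := ConnectedComponent.exact hv
  exact hwalk p

end HasLocallyRegularFactorOn

variable [DecidableEq V] [DecidableRel G.Adj]

lemma HasMatchingOn.hasLocallyRegularFactorOn (hG : G.IsRegularOfDegree (j + c)) (hj : j ∈ D)
    (h : HasMatchingOn (gadget G c) (blowUp G c C)) : HasLocallyRegularFactorOn G D C := by
  classical
  obtain ⟨M, hverts, hM⟩ := h
  have hdeg {v : V} (hv : v ∈ C) : (matchingFactor M).degree v = j :=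
    degree_matchingFactor hG hM fun x hx => by simpa [hverts, hx] using hv
  have hsupp (u v) (huv : (matchingFactor M).Adj u v) : u ∈ C := by
    obtain ⟨h, huv⟩ := huv
    simpa [hverts, owner] using M.edge_vert huv
  exact ⟨matchingFactor M, fun u v huv => huv.1, hsupp, fun v hv => (hdeg hv).symm ▸ hj,
    fun u v huv => (hdeg (hsupp u v huv)).trans (hdeg (hsupp v u huv.symm)).symm⟩

lemma exists_biUnion_eq_blowUp (hc : 0 < c) {𝒬 : Finset (Finset (G.Dart ⊕ V × Fin c))}
    (h𝒬 : ∀ A ∈ 𝒬, ∃ C, A = blowUp G c C ∧ HasLocallyRegularFactorOn G D C)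
    (hdisj : (𝒬 : Set (Finset (G.Dart ⊕ V × Fin c))).PairwiseDisjoint id) :
    ∃ C, 𝒬.biUnion id = blowUp G c C ∧ HasLocallyRegularFactorOn G D C := by
  choose! core hcore hfactor using h𝒬
  refine ⟨𝒬.biUnion core, ?_, .biUnion hfactor fun A hA B hB hAB => ?_⟩
  · ext x
    rw [mem_blowUp, mem_biUnion, mem_biUnion]
    refine exists_congr fun A => and_congr_right fun hA => ?_
    rw [id, ← mem_blowUp, ← hcore A hA]
  · refine Finset.disjoint_left.2 fun v hvA hvB => ?_
    have hmem {B} (hB : B ∈ 𝒬) (hv : v ∈ core B) : .inr (v, ⟨0, hc⟩) ∈ B := by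
      rw [hcore B hB]
      exact mem_blowUp.2 hv
    exact Finset.disjoint_left.1 (hdisj hA hB hAB) (hmem hA hvA) (hmem hB hvB)

end LocallyRegularFactor

section SmallBoundary

lemma mul_card_le_sum {ι : Type*} {s : Finset ι} {f : ι → ℕ} {n : ℕ} (h : ∀ i ∈ s, n ≤ f i) :
    n * #s ≤ ∑ i ∈ s, f i := by
  simpa only [smul_eq_mul, mul_comm] using card_nsmul_le_sum s f n h

variable {V : Type*} [Fintype V] [DecidableEq V] {G : SimpleGraph V} [DecidableRel G.Adj]
  {D : Set ℕ} {C : Finset V} {c j : ℕ} {S : Finset (G.Dart ⊕ V × Fin c)}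
  {𝒦 : Finset (Finset (G.Dart ⊕ V × Fin c))}

lemma OddBarrier.card_le_of_forall_le_cutWeight (hG : G.IsRegularOfDegree (j + c)) (hj : Odd j)
    (hc : Even c) (hC : Even #(boundary G C)) (hlt : j * #(boundary G C) < j + c + j)
    (h : OddBarrier (gadget G c) (blowUp G c C) S 𝒦)
    (hheavy : ∀ A ∈ 𝒦, j + c ≤ cutWeight (gadgetWeight j) A) : #𝒦 ≤ #S := by
  have hsum := h.sum_cutWeight_blowUp_le hG
  have hlower := mul_card_le_sum hheavy
  by_contra! hgt
  have hcard : #𝒦 = #S + 1 := by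
    by_contra hne
    have hmul : (j + c) * (#S + 2) ≤ (j + c) * #𝒦 := Nat.mul_le_mul_left _ (by omega)
    rw [mul_add] at hmul
    omega
  have hC' : Even #C := by
    rwa [← Nat.not_odd_iff_even, ← odd_card_boundary_iff hG (hj.add_even hc),
      Nat.not_odd_iff_even]
  have hodd : Odd #(remainder (blowUp G c C) S 𝒦) :=
    h.odd_card_remainder (by rw [card_blowUp hG, hcard]; grind)
  have hrem : j ≤ cutWeight (gadgetWeight j) (remainder (blowUp G c C) S 𝒦) := by
    by_contra! hlight
    obtain ⟨K, hK, hKodd⟩ := exists_eq_blowUp_of_cutWeight_lt hG hc (by omega) hodd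
    rw [hK, cutWeight_blowUp] at hlight
    exact hlight.not_ge (Nat.le_mul_of_pos_right j hKodd.pos)
  have hsum' := (h.insert_remainder hodd).sum_cutWeight_blowUp_le hG
  rw [sum_insert (remainder_notMem hodd)] at hsum'
  rw [hcard, mul_add] at hlower
  omega

lemma OddBarrier.card_lt_add_two (hG : G.IsRegularOfDegree (j + c)) (hj : Even j) (hc : Odd c)
    (hjc : j ≤ 2 * c) (hC : Odd #(boundary G C)) (hlt : j * #(boundary G C) < 2 * (j + c))
    (hmin : ∀ K ⊂ C, #(boundary G K) ≠ 1) (h : OddBarrier (gadget G c) (blowUp G c C) S 𝒦) :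
    #𝒦 < #S + 2 := by
  have hlight {A} (hA : A ∈ 𝒦) (hcut : cutWeight (gadgetWeight j) A < j + c) :
      HasCoreSupport A C ∧ #(boundary G C) = 1 ∧ c ≤ cutWeight (gadgetWeight j) A := by
    obtain ⟨K, hK, hbd, hcA⟩ :=
      exists_card_boundary_eq_one_of_cutWeight_lt hG hj hc hjc hcut (h.odd_card A hA)
    have hKC : K ⊆ C := fun v hv =>
      mem_blowUp.1 (h.subset_of_mem hA ((hK v ⟨0, hc.pos⟩).2 hv))
    obtain rfl : K = C := by_contra fun hne => hmin K (hKC.ssubset_of_ne hne) hbd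
    exact ⟨hK, hbd, hcA⟩
  have hsum := h.sum_cutWeight_blowUp_le hG
  by_contra! hge
  have hmul : (j + c) * (#S + 2) ≤ (j + c) * #𝒦 := Nat.mul_le_mul_left _ hge
  rw [mul_add] at hmul
  by_cases hex : ∃ A ∈ 𝒦, cutWeight (gadgetWeight j) A < j + c
  · obtain ⟨A, hA, hcut⟩ := hex
    obtain ⟨hsupp, hbd, hcA⟩ := hlight hA hcut
    obtain ⟨v, hv⟩ := card_pos.1 ((odd_card_boundary_iff hG (hj.add_odd hc) C).1 hC).pos
    have hrest : ∀ B ∈ 𝒦.erase A, j + c ≤ cutWeight (gadgetWeight j) B := fun B hB => by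
      by_contra! hcutB
      obtain ⟨hne, hB⟩ := mem_erase.1 hB
      exact hne (h.eq_of_mem_of_mem hB hA (((hlight hB hcutB).1 v ⟨0, hc.pos⟩).2 hv)
        ((hsupp v ⟨0, hc.pos⟩).2 hv))
    have hlower := mul_card_le_sum hrest
    rw [← add_sum_erase _ _ hA, hbd] at hsum
    rw [← card_erase_add_one hA, mul_add] at hmul
    have := hc.pos
    omega
  · push Not at hex
    have hlower := mul_card_le_sum hex
    omega

/-- The parts `C` of an `r`-regular graph to which the induction applies. The two bounds let an odd
part lose a subset with a single boundary edge, and let an even part lose odd ones. -/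
def SmallBoundary (G : SimpleGraph V) [DecidableRel G.Adj] (r j : ℕ) (C : Finset V) : Prop :=
  Odd #(boundary G C) ∧ j * #(boundary G C) < r ∨
    Even #(boundary G C) ∧ j * #(boundary G C) < r + j

lemma HasLocallyRegularFactorOn.of_even_boundary (hG : G.IsRegularOfDegree (j + c)) (hj : Odd j)
    (hc : Even c) (hc0 : 0 < c) (hjD : j ∈ D) (hC : Even #(boundary G C))
    (hlt : j * #(boundary G C) < j + c + j)
    (ih : ∀ K ⊂ C, SmallBoundary G (j + c) j K → HasLocallyRegularFactorOn G D K) :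
    HasLocallyRegularFactorOn G D C := by
  have hbarrier (S : Finset (G.Dart ⊕ V × Fin c)) (𝒦)
      (h : OddBarrier (gadget G c) (blowUp G c C) S 𝒦)
      (hbad : ∀ A ∈ 𝒦, ¬ ∃ K, A = blowUp G c K ∧ HasLocallyRegularFactorOn G D K) :
      #𝒦 ≤ #S := by
    refine h.card_le_of_forall_le_cutWeight hG hj hc hC hlt fun A hA => ?_
    by_contra! hlight
    obtain ⟨K, rfl, hK⟩ := exists_eq_blowUp_of_cutWeight_lt hG hc hlight (h.odd_card A hA)
    have hKC : K ⊂ C := ((blowUp_subset_blowUp_iff hc0).1 (h.subset_of_mem hA)).ssubset_of_ne <| by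
      rintro rfl
      exact Nat.not_odd_iff_even.2 hC hK
    rw [cutWeight_blowUp] at hlight
    exact hbad _ hA ⟨K, rfl, ih K hKC (.inl ⟨hK, hlight⟩)⟩
  obtain ⟨𝒬, h𝒬, hdisj, hmatch⟩ := exists_hasMatchingOn_sdiff hbarrier
  obtain ⟨K, hK, hKfactor⟩ := exists_biUnion_eq_blowUp hc0 (fun A hA => (h𝒬 A hA).1) hdisj
  have hKC : K ⊆ C :=
    (blowUp_subset_blowUp_iff hc0).1 (hK ▸ biUnion_subset.2 fun A hA => (h𝒬 A hA).2)
  rw [hK, ← blowUp_sdiff] at hmatch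
  exact hKfactor.of_subset (hmatch.hasLocallyRegularFactorOn hG hjD) hKC

lemma HasLocallyRegularFactorOn.of_ssubset {r : ℕ} (hG : G.IsRegularOfDegree r) (hr : Odd r)
    (hC : Odd #(boundary G C)) (hlt : j * #(boundary G C) < r) {K : Finset V} (hK : K ⊂ C)
    (hbd : #(boundary G K) = 1)
    (ih : ∀ K ⊂ C, SmallBoundary G r j K → HasLocallyRegularFactorOn G D K) :
    HasLocallyRegularFactorOn G D C := by
  have hj : j < r := (Nat.le_mul_of_pos_right j hC.pos).trans_lt hlt
  have hKodd : Odd #K := (odd_card_boundary_iff hG hr K).1 (by simp [hbd])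
  have hKfactor : HasLocallyRegularFactorOn G D K := ih K hK (.inl (by simpa [hbd] using hj))
  have hrest : SmallBoundary G r j (C \ K) := by
    refine .inr ⟨?_, ?_⟩
    · have hcard := card_sdiff_add_card_eq_card hK.subset
      have hCodd := (odd_card_boundary_iff hG hr C).1 hC
      rw [← Nat.not_odd_iff_even, odd_card_boundary_iff hG hr]
      grind
    · calc j * #(boundary G (C \ K)) ≤ j * (#(boundary G C) + #(boundary G K)) := by
            gcongr; exact card_boundary_sdiff_le C K
        _ < r + j := by rw [hbd]; linarith
  exact hKfactor.of_subset
    (ih _ (sdiff_ssubset hK.subset (card_pos.1 hKodd.pos)) hrest) hK.subset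

lemma SmallBoundary.hasLocallyRegularFactorOn {j' c' : ℕ} (hG : G.IsRegularOfDegree (j + c))
    (hjc : j + c = j' + c') (hj : Odd j) (hc : Even c) (hc0 : 0 < c) (hj' : Even j')
    (hc' : Odd c') (hjc' : j' ≤ 2 * c') (hjj' : j' ≤ 2 * j) (hC : SmallBoundary G (j + c) j C) :
    HasLocallyRegularFactorOn G {j, j'} C := by
  have hr : Odd (j + c) := hj.add_even hc
  have hG' : G.IsRegularOfDegree (j' + c') := hjc ▸ hG
  induction C using Finset.strongInduction with | _ C ih =>
  rcases hC with ⟨hodd, hlt⟩ | ⟨heven, hlt⟩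
  · by_cases hex : ∃ K ⊂ C, #(boundary G K) = 1
    · obtain ⟨K, hK, hbd⟩ := hex
      exact .of_ssubset hG hr hodd hlt hK hbd ih
    · push Not at hex
      have hlt' : j' * #(boundary G C) < 2 * (j' + c') := calc
        j' * #(boundary G C) ≤ 2 * j * #(boundary G C) := by gcongr
        _ < 2 * (j' + c') := by linarith
      have heven : Even #(blowUp G c' C) := by
        have hCodd := (odd_card_boundary_iff hG hr C).1 hodd
        rw [card_blowUp hG]
        grind
      have hmatch := hasMatchingOn_of_card_lt_add_two heven fun S 𝒦 h =>
        h.card_lt_add_two hG' hj' hc' hjc' hodd hlt' hex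
      exact hmatch.hasLocallyRegularFactorOn hG' (by simp)
  · exact .of_even_boundary hG hj hc hc0 (by simp) heven hlt ih

end SmallBoundary

open scoped Classical in
theorem stmt_7_general {V : Type*} [Fintype V] (G : SimpleGraph V) {r j j' : ℕ} (hr : Odd r)
    (hreg : G.IsRegularOfDegree r) (hj : Odd j) (hjr : j < r) (hj' : Even j')
    (hjr' : 3 * j' ≤ 2 * r) (hjj' : j' ≤ 2 * j) :
    ∃ F ≤ G, (∀ v, F.degree v ∈ ({j, j'} : Set ℕ)) ∧
      ∀ K : F.ConnectedComponent, ∃ d, ∀ v ∈ K.supp, F.degree v = d := by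
  obtain ⟨c, rfl⟩ := Nat.exists_eq_add_of_le hjr.le
  obtain ⟨c', hc'⟩ := Nat.exists_eq_add_of_le (show j' ≤ j + c by omega)
  have huniv : SmallBoundary G (j + c) j univ := .inr (by simp [boundary_univ, hj.pos])
  have hfactor := huniv.hasLocallyRegularFactorOn hreg hc' hj (by grind) (by omega) hj'
    (by grind) (by omega) hjj'
  exact hfactor.exists_forall_mem_supp

open scoped Classical in
/-- Let `r ≥ 3` be odd and `1 ≤ k ≤ 2r/3`. Then every `r`-regular graph has a
`[k-1, k]`-factor each of whose connected components is regular. -/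
theorem stmt_7 {V : Type*} [Fintype V] (G : SimpleGraph V)
    (r k : ℕ) (hodd : Odd r) (hr : 3 ≤ r) (hk1 : 1 ≤ k) (hk2 : 3 * k ≤ 2 * r)
    (hreg : G.IsRegularOfDegree r) :
    ∃ F : SimpleGraph V, F ≤ G ∧
      (∀ v : V, k - 1 ≤ F.degree v ∧ F.degree v ≤ k) ∧
      (∀ c : F.ConnectedComponent, ∃ d : ℕ, ∀ v ∈ c.supp, F.degree v = d) := by
  obtain ⟨j, j', hj, hj', hjk⟩ :
      ∃ j j', Odd j ∧ Even j' ∧ (j = k ∧ j' = k - 1 ∨ j = k - 1 ∧ j' = k) := by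
    rcases Nat.even_or_odd k with hk | hk
    exacts [⟨k - 1, k, by grind⟩, ⟨k, k - 1, by grind⟩]
  have hj_pos := hj.pos
  obtain ⟨F, hF, hdeg, hcomp⟩ :=
    stmt_7_general G hodd hreg hj (by omega) hj' (by omega) (by omega)
  exact ⟨F, hF, fun v => by rcases hdeg v with h | h <;> grind, hcomp⟩
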